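/- Assume m ≥ 2, a > 0, b ∈ ℝ, c = 2/a − 1, and define K(x,y) = (‖x‖ ‖y‖)^{−ab/2} exp( −(2i/a) ⟨x,y⟩ (‖x‖ ‖y‖)^{a/2−1} ), h(x) = ‖x‖^{ a b − (1 − a/2) m }, and for t ∈ ℕ the radial polynomial p_t(r) = Σ_{i=0}^t 2^{2t}(2/a)^{2t} binom(t,i) (Γ(m/2 + t)/Γ(m/2 + i)) (a/2)^{t−i} (−1)^i r^{a i}. Then for every t ∈ ℕ and every y ≠ 0: (2π)^{−m/2} (2/a)^{m/2−1} ∫_{ℝᵐ} K(x,y) p_t(‖x‖) ‖x‖^{−ab/2} e^{−‖x‖^a / a} h(x) dx = (−1)^t p_t(‖y‖) ‖y‖^{−ab/2} e^{−‖y‖^a / a}. (The radial generalized Laguerre functions of degree ℓ = 0 are eigenfunctions of the deformed Fourier transform F_D with eigenvalues (−i)^{2t} = (−1)^t, for k = 0 and c = 2/a − 1.) -/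

import Mathlib

open Real

/-- `j`-th partial derivative of a complex-valued function on Euclidean space. -/
noncomputable def pdC {m : ℕ} (j : Fin m) (f : EuclideanSpace ℝ (Fin m) → ℂ)
    (x : EuclideanSpace ℝ (Fin m)) : ℂ :=
  fderiv ℝ f x (EuclideanSpace.single j 1)

/-- The kernel
`K(x,y) = (‖x‖‖y‖)^{-ab/2} exp(-(2i/a) ⟨x,y⟩ (‖x‖‖y‖)^{a/2-1})` of the deformed
Fourier transform (case `c = 2/a - 1`, `k = 0`). -/
noncomputable def Kker (m : ℕ) (a b : ℝ) (x y : EuclideanSpace ℝ (Fin m)) : ℂ :=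
  (((‖x‖ * ‖y‖) ^ (-(a * b) / 2) : ℝ) : ℂ)
    * Complex.exp (-(2 * Complex.I / (a : ℂ)) * ((∑ j, x j * y j : ℝ) : ℂ)
        * (((‖x‖ * ‖y‖) ^ (a / 2 - 1) : ℝ) : ℂ))

open MeasureTheory

/-- The radial polynomial
`p_t(r) = Σ_{i=0}^t 2^{2t}(2/a)^{2t} C(t,i) (Γ(m/2+t)/Γ(m/2+i)) (a/2)^{t-i} (-1)^i r^{a i}`. -/
noncomputable def lagP16 (m : ℕ) (a : ℝ) (t : ℕ) (r : ℝ) : ℝ :=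
  ∑ i ∈ Finset.range (t + 1),
    2 ^ (2 * t) * (2 / a) ^ (2 * t) * (t.choose i : ℝ)
      * (Real.Gamma ((m : ℝ) / 2 + t) / Real.Gamma ((m : ℝ) / 2 + i))
      * (a / 2) ^ (t - i) * (-1 : ℝ) ^ i * r ^ (a * i)

/-!
The map `x ↦ ‖x‖^(a/2 - 1) x` has Jacobian a constant times a power of the norm, and it carries the
phase of the deformed kernel to that of the classical Fourier kernel. The claim thus reduces to
`e^{-s‖u‖²} L_t(2s‖u‖²)` being an eigenfunction of the classical Fourier transform. Its transform
is a combination of Gaussian moments `M_j(s) = ∫ ‖u‖^{2j} e^{-s‖u‖² + c⟨w,u⟩} du`; since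
`M_{j+1} = -dM_j/ds` is the recurrence of the Laguerre polynomials, `M_j` is a Laguerre polynomial
times a Gaussian, and the multiplication theorem
`∑ j, C(t,j) (Γ(μ+t)/Γ(μ+j)) y^j (1-y)^(t-j) L_j(z) = L_t(y z)`, at `y = 2`, sums the moments up to
the eigenvalue `(-1)^t`.
-/

open Polynomial Finset in
/-- The unnormalized Laguerre polynomial
`t! L_t^{(μ - 1)} = ∑ k ≤ t, C(t, k) (Γ(μ + t) / Γ(μ + k)) (-X)^k`. The parameter is shifted by one
with respect to the classical `α = μ - 1`, so that `μ` is half the dimension for radial functions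
on Euclidean space. -/
noncomputable def laguerre (μ : ℝ) (t : ℕ) : ℝ[X] :=
  ∑ k ∈ range (t + 1), monomial k ((-1) ^ k * (t.choose k * (Gamma (μ + t) / Gamma (μ + k))))

section Laguerre

open Polynomial Finset

theorem sum_choose_mul_choose_mul_pow {R : Type*} [CommSemiring R] (x y : R) {k t : ℕ}
    (hk : k ≤ t) :
    ∑ j ∈ range (t + 1), (t.choose j * j.choose k : R) * (x ^ j * y ^ (t - j)) =
      t.choose k * x ^ k * (x + y) ^ (t - k) := by
  obtain ⟨n, rfl⟩ := Nat.exists_eq_add_of_le hk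
  have hlow : ∑ j ∈ range k,
      ((k + n).choose j * j.choose k : R) * (x ^ j * y ^ (k + n - j)) = 0 :=
    sum_eq_zero fun j hj => by simp [Nat.choose_eq_zero_of_lt (mem_range.mp hj)]
  rw [add_assoc, sum_range_add, hlow, zero_add, Nat.add_sub_cancel_left, add_pow, mul_sum]
  refine sum_congr rfl fun i _ => ?_
  have hchoose : ((k + n).choose (k + i) * (k + i).choose k : R) =
      (k + n).choose k * n.choose i := by
    have h := Nat.choose_mul (n := k + n) (Nat.le_add_right k i)
    rw [Nat.add_sub_cancel_left, Nat.add_sub_cancel_left] at h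
    rw [← Nat.cast_mul, h, Nat.cast_mul]
  rw [hchoose, Nat.add_sub_add_left, pow_add]
  ring

theorem coeff_laguerre (μ : ℝ) (t k : ℕ) :
    (laguerre μ t).coeff k = (-1) ^ k * (t.choose k * (Gamma (μ + t) / Gamma (μ + k))) := by
  simp only [laguerre, finsetSum_coeff, coeff_monomial, sum_ite_eq', mem_range, ite_eq_left_iff]
  intro hk
  simp [Nat.choose_eq_zero_of_lt (by omega : t < k)]

theorem aeval_laguerre {A : Type*} [CommRing A] [Algebra ℝ A] (μ : ℝ) {t n : ℕ} (ht : t ≤ n)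
    (z : A) :
    aeval z (laguerre μ t) =
      ∑ k ∈ range (n + 1),
        algebraMap ℝ A (t.choose k * (Gamma (μ + t) / Gamma (μ + k))) * (-z) ^ k := by
  rw [← sum_subset (range_mono (Nat.succ_le_succ ht))]
  · simp only [laguerre, map_sum, aeval_monomial]
    refine sum_congr rfl fun k _ => ?_
    rw [neg_pow z]
    simp only [map_mul, map_pow, map_neg, map_one]
    ring
  · intro k _ hk
    simp [Nat.choose_eq_zero_of_lt (by simpa using hk : t < k)]

theorem laguerre_zero {μ : ℝ} (hμ : 0 < μ) : laguerre μ 0 = 1 := by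
  simp [laguerre, (Gamma_pos_of_pos hμ).ne']

theorem laguerre_succ {μ : ℝ} (hμ : 0 < μ) (t : ℕ) :
    laguerre μ (t + 1) =
      (C (μ + t) - X) * laguerre μ t + X * derivative (laguerre μ t) := by
  have hΓ_succ (n : ℕ) : Gamma (μ + (n + 1)) = (μ + n) * Gamma (μ + n) := by
    rw [← add_assoc, Gamma_add_one (by positivity)]
  ext (_ | k)
  · simp [coeff_laguerre, sub_mul, hΓ_succ, mul_div_assoc]
  · have hΓ : Gamma (μ + k) ≠ 0 := (Gamma_pos_of_pos (by positivity)).ne'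
    have hchoose : (t.choose (k + 1) : ℝ) * (k + 1) = t.choose k * (t - k) := by
      rcases le_or_gt k t with h | h
      · rw [← Nat.cast_sub h]
        exact_mod_cast Nat.choose_succ_right_eq t k
      · simp [Nat.choose_eq_zero_of_lt h, Nat.choose_eq_zero_of_lt (h.trans k.lt_succ_self)]
    simp only [coeff_laguerre, sub_mul, coeff_add, coeff_sub, coeff_C_mul, coeff_X_mul,
      coeff_derivative, Nat.choose_succ_succ, Nat.cast_add, Nat.cast_one, hΓ_succ, pow_succ]
    field_simp
    linear_combination hchoose

theorem sum_laguerre_mul_pow {A : Type*} [CommRing A] [Algebra ℝ A] {μ : ℝ} (hμ : 0 < μ) (t : ℕ)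
    (y z : A) :
    ∑ j ∈ range (t + 1), algebraMap ℝ A (t.choose j * (Gamma (μ + t) / Gamma (μ + j))) *
        (y ^ j * (1 - y) ^ (t - j)) * aeval z (laguerre μ j) =
      aeval (y * z) (laguerre μ t) := by
  have hcancel (j k : ℕ) :
      (t.choose j : ℝ) * (Gamma (μ + t) / Gamma (μ + j)) *
          (j.choose k * (Gamma (μ + j) / Gamma (μ + k))) =
        t.choose j * j.choose k * (Gamma (μ + t) / Gamma (μ + k)) := by
    have hΓ : Gamma (μ + j) ≠ 0 := (Gamma_pos_of_pos (by positivity)).ne'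
    field_simp
  calc
    _ = ∑ j ∈ range (t + 1), ∑ k ∈ range (t + 1),
          algebraMap ℝ A (Gamma (μ + t) / Gamma (μ + k)) * (-z) ^ k *
            ((t.choose j * j.choose k : A) * (y ^ j * (1 - y) ^ (t - j))) := by
      refine sum_congr rfl fun j hj => ?_
      rw [aeval_laguerre μ (mem_range_succ_iff.mp hj), mul_sum]
      refine sum_congr rfl fun k _ => ?_
      have := congrArg (algebraMap ℝ A) (hcancel j k)
      simp only [map_mul, map_natCast] at this ⊢
      linear_combination (y ^ j * (1 - y) ^ (t - j) * (-z) ^ k) * this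
    _ = ∑ k ∈ range (t + 1), algebraMap ℝ A (Gamma (μ + t) / Gamma (μ + k)) * (-z) ^ k *
          (t.choose k * y ^ k) := by
      rw [sum_comm]
      refine sum_congr rfl fun k hk => ?_
      rw [← mul_sum, sum_choose_mul_choose_mul_pow y (1 - y) (mem_range_succ_iff.mp hk),
        add_sub_cancel, one_pow, mul_one]
    _ = aeval (y * z) (laguerre μ t) := by
      rw [aeval_laguerre μ le_rfl]
      refine sum_congr rfl fun k _ => ?_
      rw [← mul_neg, mul_pow, map_mul, map_natCast]
      ring

end Laguerre

section Gaussian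

open scoped InnerProductSpace

variable {V : Type*} [NormedAddCommGroup V] [InnerProductSpace ℝ V]

/-- The function `e^{-s‖u‖²} t! L_t^{(n/2 - 1)}(2s‖u‖²)` on an `n`-dimensional space, a radial
eigenfunction of the classical Fourier transform. -/
noncomputable def laguerreGaussian (s : ℂ) (t : ℕ) (u : V) : ℂ :=
  Complex.exp (-s * ‖u‖ ^ 2) *
    Polynomial.aeval (2 * s * ‖u‖ ^ 2) (laguerre ((Module.finrank ℝ V : ℝ) / 2) t)

theorem hasDerivAt_const_div {c s : ℂ} (hs : s ≠ 0) :
    HasDerivAt (fun z => c / z) (-(c / s) / s) s := by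
  simpa only [div_eq_mul_inv] using ((hasDerivAt_inv hs).const_mul c).congr_deriv (by field_simp)

theorem hasDerivAt_const_div_cpow {c s : ℂ} (hs : s ≠ 0) (hcs : c / s ∈ Complex.slitPlane)
    (μ : ℂ) :
    HasDerivAt (fun z => (c / z) ^ μ) (-(μ / s) * (c / s) ^ μ) s := by
  have hcs0 := Complex.slitPlane_ne_zero hcs
  have hc : c ≠ 0 := (div_ne_zero_iff.mp hcs0).1
  refine ((hasDerivAt_const_div hs).cpow_const hcs).congr_deriv ?_
  rw [Complex.cpow_sub _ _ hcs0, Complex.cpow_one]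
  field_simp

theorem hasDerivAt_cpow_mul_exp_mul_laguerre {μ : ℝ} (hμ : 0 < μ) {c s : ℂ} (hs : s ≠ 0)
    (hcs : c / s ∈ Complex.slitPlane) (κ : ℂ) (j : ℕ) :
    HasDerivAt
      (fun s => (c / s) ^ (μ : ℂ) / s ^ j *
        (Complex.exp (-(κ / s)) * Polynomial.aeval (κ / s) (laguerre μ j)))
      (-((c / s) ^ (μ : ℂ) / s ^ (j + 1) *
        (Complex.exp (-(κ / s)) * Polynomial.aeval (κ / s) (laguerre μ (j + 1))))) s := by
  have hpow : HasDerivAt (fun s => (c / s) ^ (μ : ℂ) / s ^ j)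
      (-(μ + j) * ((c / s) ^ (μ : ℂ) / s ^ (j + 1))) s := by
    refine ((hasDerivAt_const_div_cpow hs hcs μ).div (hasDerivAt_pow j s)
      (pow_ne_zero j hs)).congr_deriv ?_
    rcases j with _ | j
    · simp only [pow_zero, Nat.cast_zero, zero_mul, mul_zero, sub_zero, add_zero, zero_add,
        mul_one, one_pow, div_one, pow_one]
      field_simp
    · rw [Nat.add_sub_cancel]
      field_simp
      ring
  have hκ : HasDerivAt (fun s => κ / s) (-(κ / s) / s) s := hasDerivAt_const_div hs
  have hexp : HasDerivAt (fun s => Complex.exp (-(κ / s)))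
      (Complex.exp (-(κ / s)) * -(-(κ / s) / s)) s := hκ.fun_neg.cexp
  have hlaguerre : HasDerivAt (fun s => Polynomial.aeval (κ / s) (laguerre μ j))
      (Polynomial.aeval (κ / s) (Polynomial.derivative (laguerre μ j)) * (-(κ / s) / s)) s :=
    ((laguerre μ j).hasDerivAt_aeval (κ / s)).comp s hκ
  refine (hpow.mul (hexp.fun_mul hlaguerre)).congr_deriv ?_
  simp only [laguerre_succ hμ, map_add, map_mul, map_sub, map_natCast, Polynomial.aeval_C,
    Polynomial.aeval_X, Complex.coe_algebraMap]
  field_simp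
  ring

theorem pow_mul_exp_neg_mul_le {δ q : ℝ} (hδ : 0 < δ) (hq : 0 ≤ q) (j : ℕ) :
    q ^ j * rexp (-(δ * q)) ≤ j.factorial / δ ^ j := by
  have h := pow_div_factorial_le_exp (δ * q) (by positivity) j
  rw [exp_neg, ← div_eq_mul_inv, div_le_div_iff₀ (exp_pos _) (by positivity)]
  rw [div_le_iff₀ (by positivity), mul_pow] at h
  linarith

theorem laguerreGaussian_mul_cexp (s z : ℂ) (t : ℕ) (u : V) :
    laguerreGaussian s t u * Complex.exp z =
      ∑ j ∈ Finset.range (t + 1),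
        algebraMap ℝ ℂ (t.choose j * (Gamma ((Module.finrank ℝ V : ℝ) / 2 + t) /
          Gamma ((Module.finrank ℝ V : ℝ) / 2 + j))) * (-(2 * s)) ^ j *
            (((‖u‖ : ℂ) ^ 2) ^ j * Complex.exp (-s * ‖u‖ ^ 2 + z)) := by
  rw [laguerreGaussian, aeval_laguerre _ le_rfl, mul_right_comm, ← Complex.exp_add,
    Finset.mul_sum]
  refine Finset.sum_congr rfl fun j _ => ?_
  rw [← neg_mul (2 * s), mul_pow]
  ring

variable [FiniteDimensional ℝ V]

theorem finrank_div_two_pos [Nontrivial V] : 0 < (Module.finrank ℝ V : ℝ) / 2 := by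
  have := Module.finrank_pos (R := ℝ) (M := V)
  positivity

variable [MeasurableSpace V] [BorelSpace V]

theorem integrable_norm_sq_pow_mul_cexp_neg_mul_sq_norm_add {s : ℂ} (hs : 0 < s.re) (c : ℂ)
    (w : V) (j : ℕ) :
    Integrable fun u : V => ((‖u‖ : ℂ) ^ 2) ^ j * Complex.exp (-s * ‖u‖ ^ 2 + c * ⟪w, u⟫_ℝ) := by
  have hs2 : 0 < (s / 2).re := by simpa using hs
  refine ((GaussianFourier.integrable_cexp_neg_mul_sq_norm_add hs2 c w).bdd_mul
    (f := fun u : V => ((‖u‖ : ℂ) ^ 2) ^ j * Complex.exp (-(s / 2) * ‖u‖ ^ 2))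
    (c := j.factorial / (s / 2).re ^ j)
    (Continuous.aestronglyMeasurable (by fun_prop)) (.of_forall fun u => ?_)).congr
    (.of_forall fun u => ?_)
  · have hre : (-(s / 2) * (‖u‖ : ℂ) ^ 2).re = -((s / 2).re * ‖u‖ ^ 2) := by
      rw [← Complex.ofReal_pow, Complex.re_mul_ofReal, Complex.neg_re, neg_mul]
    rw [norm_mul, Complex.norm_exp, hre, norm_pow, norm_pow, Complex.norm_real, norm_norm]
    exact pow_mul_exp_neg_mul_le hs2 (by positivity) j
  · simp only [mul_assoc, ← Complex.exp_add]
    ring_nf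

theorem hasDerivAt_integral_norm_sq_pow_mul_cexp_neg_mul_sq_norm_add {s : ℂ} (hs : 0 < s.re)
    (c : ℂ) (w : V) (j : ℕ) :
    HasDerivAt
      (fun s : ℂ => ∫ u : V, ((‖u‖ : ℂ) ^ 2) ^ j * Complex.exp (-s * ‖u‖ ^ 2 + c * ⟪w, u⟫_ℝ))
      (-∫ u : V, ((‖u‖ : ℂ) ^ 2) ^ (j + 1) * Complex.exp (-s * ‖u‖ ^ 2 + c * ⟪w, u⟫_ℝ)) s := by
  have hs2 : 0 < (s / 2).re := by simpa using hs
  have hlt : (s / 2).re < s.re := by rw [Complex.div_ofNat_re]; linarith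
  rw [← integral_neg]
  refine (hasDerivAt_integral_of_dominated_loc_of_deriv_le
    (F' := fun s u => -(((‖u‖ : ℂ) ^ 2) ^ (j + 1) *
      Complex.exp (-s * ‖u‖ ^ 2 + c * ⟪w, u⟫_ℝ)))
    ((isOpen_lt continuous_const Complex.continuous_re).mem_nhds hlt)
    (.of_forall fun _ => Continuous.aestronglyMeasurable (by fun_prop))
    (integrable_norm_sq_pow_mul_cexp_neg_mul_sq_norm_add hs c w j)
    (Continuous.aestronglyMeasurable (by fun_prop)) (.of_forall fun u z hz => ?_)
    (integrable_norm_sq_pow_mul_cexp_neg_mul_sq_norm_add hs2 c w (j + 1)).norm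
    (.of_forall fun u z _ => ?_)).2
  · have hre : (s / 2).re ≤ z.re := le_of_lt hz
    rw [norm_neg, norm_mul, norm_mul, Complex.norm_exp, Complex.norm_exp]
    refine mul_le_mul_of_nonneg_left (exp_le_exp.mpr ?_) (norm_nonneg _)
    simp only [← Complex.ofReal_pow, Complex.add_re, Complex.re_mul_ofReal, Complex.neg_re]
    gcongr
  · have hexponent : HasDerivAt (fun z : ℂ => -z * (‖u‖ : ℂ) ^ 2 + c * ⟪w, u⟫_ℝ)
        (-1 * (‖u‖ : ℂ) ^ 2) z := ((hasDerivAt_id z).neg.mul_const _).add_const _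
    exact (hexponent.cexp.const_mul _).congr_deriv (by ring)

variable [Nontrivial V]

-- Both sides satisfy `M_{j+1} = -dM_j/ds`, and for `j = 0` this is the Gaussian Fourier transform.
theorem integral_norm_sq_pow_mul_cexp_neg_mul_sq_norm_add {s : ℂ} (hs : 0 < s.re) (c : ℂ) (w : V)
    (j : ℕ) :
    ∫ u : V, ((‖u‖ : ℂ) ^ 2) ^ j * Complex.exp (-s * ‖u‖ ^ 2 + c * ⟪w, u⟫_ℝ) =
      (π / s) ^ (((Module.finrank ℝ V : ℝ) / 2 : ℝ) : ℂ) / s ^ j *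
        (Complex.exp (-(-(c ^ 2 * ‖w‖ ^ 2 / 4) / s)) *
          Polynomial.aeval (-(c ^ 2 * ‖w‖ ^ 2 / 4) / s)
            (laguerre ((Module.finrank ℝ V : ℝ) / 2) j)) := by
  have hμ := finrank_div_two_pos (V := V)
  induction j generalizing s with
  | zero =>
    simp only [pow_zero, one_mul, GaussianFourier.integral_cexp_neg_mul_sq_norm_add hs c w,
      laguerre_zero hμ, map_one, mul_one, div_one]
    push_cast
    congr 2
    field_simp
  | succ j ih =>
    have hs0 := Complex.ne_zero_of_re_pos hs
    have hslit : (π : ℂ) / s ∈ Complex.slitPlane := by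
      have := Complex.normSq_pos.mpr hs0
      left
      simp only [Complex.div_re, Complex.ofReal_re, Complex.ofReal_im, zero_mul, zero_div,
        add_zero]
      positivity
    have hclosed := (hasDerivAt_cpow_mul_exp_mul_laguerre hμ hs0 hslit
      (-(c ^ 2 * ‖w‖ ^ 2 / 4)) j).congr_of_eventuallyEq <| by
        filter_upwards [(isOpen_lt continuous_const Complex.continuous_re).mem_nhds hs] with z hz
        exact ih hz
    exact neg_injective
      ((hasDerivAt_integral_norm_sq_pow_mul_cexp_neg_mul_sq_norm_add hs c w j).unique hclosed)

theorem integral_laguerreGaussian_mul_cexp {s : ℂ} (hs : 0 < s.re) (t : ℕ) (w : V) :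
    ∫ u : V, laguerreGaussian s t u * Complex.exp (-(2 * Complex.I * s) * ⟪w, u⟫_ℝ) =
      (-1) ^ t * (π / s) ^ (((Module.finrank ℝ V : ℝ) / 2 : ℝ) : ℂ) * laguerreGaussian s t w := by
  have hs0 := Complex.ne_zero_of_re_pos hs
  have hκ : -((-(2 * Complex.I * s)) ^ 2 * (‖w‖ : ℂ) ^ 2 / 4) / s = s * ‖w‖ ^ 2 := by
    simp only [neg_sq, mul_pow, Complex.I_sq]
    field_simp
    ring
  have hmultiplication :=
    sum_laguerre_mul_pow (finrank_div_two_pos (V := V)) t 2 (s * (‖w‖ : ℂ) ^ 2)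
  simp only [laguerreGaussian_mul_cexp]
  rw [integral_finsetSum _ fun j _ =>
    (integrable_norm_sq_pow_mul_cexp_neg_mul_sq_norm_add hs _ w j).const_mul _]
  simp only [integral_const_mul, integral_norm_sq_pow_mul_cexp_neg_mul_sq_norm_add hs, hκ]
  rw [laguerreGaussian, mul_assoc 2, ← hmultiplication, Finset.mul_sum, Finset.mul_sum]
  refine Finset.sum_congr rfl fun j hj => ?_
  have hsign : (-1 : ℂ) ^ t * (1 - 2) ^ (t - j) = (-1) ^ j := by
    obtain ⟨n, rfl⟩ := Nat.exists_eq_add_of_le (Finset.mem_range_succ_iff.mp hj)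
    rw [Nat.add_sub_cancel_left, pow_add, mul_assoc, ← mul_pow]
    norm_num
  have hscale : (-(2 * s)) ^ j = (-1) ^ t * (1 - 2) ^ (t - j) * 2 ^ j * s ^ j := by
    rw [hsign, neg_pow, mul_pow, mul_assoc]
  rw [hscale, neg_mul s]
  field_simp

end Gaussian

section RadialPow

variable {V : Type*} [NormedAddCommGroup V] [InnerProductSpace ℝ V]

/-- The map `x ↦ ‖x‖^(p-1) x`, which fixes directions and raises the norm to the power `p`. It
conjugates the deformed Fourier transform with parameter `a = 2p` to the classical one. -/
noncomputable def radialPow (p : ℝ) (x : V) : V :=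
  ‖x‖ ^ (p - 1) • x

/-- The derivative of `radialPow p` away from the origin. -/
noncomputable def radialPowFDeriv (p : ℝ) (x : V) : V →L[ℝ] V :=
  ‖x‖ ^ (p - 1) • (.id ℝ V + ((p - 1) / ‖x‖ ^ 2) • InnerProductSpace.rankOne ℝ x x)

@[simp]
theorem radialPow_zero (p : ℝ) : radialPow p (0 : V) = 0 := by
  simp [radialPow]

theorem norm_radialPow {p : ℝ} (hp : p ≠ 0) (x : V) : ‖radialPow p x‖ = ‖x‖ ^ p := by
  rcases eq_or_ne x 0 with rfl | hx
  · simp [zero_rpow hp]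
  · have hx' : ‖x‖ ≠ 0 := norm_ne_zero_iff.mpr hx
    rw [radialPow, norm_smul, norm_of_nonneg (by positivity), rpow_sub_one hx',
      div_mul_cancel₀ _ hx']

theorem inner_radialPow_radialPow (p : ℝ) (x y : V) :
    inner ℝ (radialPow p x) (radialPow p y) = (‖x‖ * ‖y‖) ^ (p - 1) * inner ℝ x y := by
  rw [radialPow, radialPow, real_inner_smul_left, real_inner_smul_right,
    mul_rpow (norm_nonneg x) (norm_nonneg y), mul_assoc]

theorem leftInverse_radialPow_inv {p : ℝ} (hp : p ≠ 0) :
    Function.LeftInverse (radialPow p⁻¹) (radialPow p : V → V) := by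
  intro x
  rcases eq_or_ne x 0 with rfl | hx
  · simp
  · have hexp : p * (p⁻¹ - 1) + (p - 1) = 0 := by field_simp; ring
    rw [radialPow, norm_radialPow hp, radialPow, smul_smul, ← rpow_mul (norm_nonneg x),
      ← rpow_add (norm_pos_iff.mpr hx), hexp, rpow_zero, one_smul]

theorem bijective_radialPow {p : ℝ} (hp : p ≠ 0) : (radialPow p : V → V).Bijective := by
  have hright := leftInverse_radialPow_inv (V := V) (inv_ne_zero hp)
  rw [inv_inv] at hright
  exact ⟨(leftInverse_radialPow_inv hp).injective, hright.surjective⟩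

theorem hasFDerivAt_radialPow (p : ℝ) {x : V} (hx : x ≠ 0) :
    HasFDerivAt (radialPow p) (radialPowFDeriv p x) x := by
  have hsq (q : ℝ) (z : V) : (‖z‖ ^ 2) ^ (q / 2) = ‖z‖ ^ q := by
    rw [← rpow_natCast, ← rpow_mul (norm_nonneg z)]
    congr 1
    push_cast
    ring
  have hnorm := (hasStrictFDerivAt_norm_sq x).hasFDerivAt.rpow_const (p := (p - 1) / 2)
    (.inl (by positivity))
  simp only [hsq, rpow_sub_one (pow_ne_zero 2 (norm_ne_zero_iff.mpr hx))] at hnorm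
  refine (hnorm.smul (hasFDerivAt_id x)).congr_fderiv ?_
  ext v
  simp only [radialPowFDeriv, _root_.add_apply, _root_.smul_apply, smul_add, smul_smul, id,
    ContinuousLinearMap.smulRight_apply, ContinuousLinearMap.id_apply, innerSL_apply_apply,
    InnerProductSpace.rankOne_apply, smul_eq_mul, nsmul_eq_mul, Nat.cast_ofNat]
  module

variable [FiniteDimensional ℝ V]

theorem det_radialPowFDeriv (p : ℝ) {x : V} (hx : x ≠ 0) :
    (radialPowFDeriv p x).det = p * ‖x‖ ^ ((p - 1) * Module.finrank ℝ V) := by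
  have htransvection : (radialPowFDeriv p x : V →ₗ[ℝ] V) =
      ‖x‖ ^ (p - 1) • LinearMap.transvection (((p - 1) / ‖x‖ ^ 2) • innerₛₗ ℝ x) x := by
    ext v
    simp only [radialPowFDeriv, smul_smul, ContinuousLinearMap.toLinearMap_add,
      ContinuousLinearMap.toLinearMap_smul, ContinuousLinearMap.coe_id, LinearMap.add_apply,
      LinearMap.smul_apply, LinearMap.id_coe, id_eq, ContinuousLinearMap.coe_coe,
      InnerProductSpace.rankOne_apply, LinearMap.transvection.apply, innerₛₗ_apply_apply,
      smul_eq_mul]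
  have hx' : ‖x‖ ≠ 0 := norm_ne_zero_iff.mpr hx
  rw [ContinuousLinearMap.det, htransvection, LinearMap.det_smul, LinearMap.transvection.det,
    rpow_mul (norm_nonneg x), rpow_natCast, LinearMap.smul_apply, innerₛₗ_apply_apply,
    real_inner_self_eq_norm_sq, smul_eq_mul, div_mul_cancel₀ _ (pow_ne_zero 2 hx')]
  ring

variable [MeasurableSpace V] [BorelSpace V] [Nontrivial V]

theorem integral_radialPow_smul {F : Type*} [NormedAddCommGroup F] [NormedSpace ℝ F]
    (ν : Measure V) [ν.IsAddHaarMeasure] {p : ℝ} (hp : p ≠ 0) (f : V → F) :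
    ∫ x, (|p| * ‖x‖ ^ ((p - 1) * Module.finrank ℝ V)) • f (radialPow p x) ∂ν = ∫ u, f u ∂ν := by
  have hbij := bijective_radialPow (V := V) hp
  have himage : radialPow p '' ({0}ᶜ : Set V) = {0}ᶜ := by
    rw [Set.image_compl_eq hbij, Set.image_singleton, radialPow_zero]
  have hchange := integral_image_eq_integral_abs_det_fderiv_smul ν
    (measurableSet_singleton (0 : V)).compl
    (fun x hx => (hasFDerivAt_radialPow p hx).hasFDerivWithinAt) hbij.injective.injOn f
  rw [himage, restrict_compl_singleton] at hchange
  rw [hchange]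
  refine integral_congr_ae ?_
  filter_upwards [Measure.ae_ne ν 0] with x hx
  rw [det_radialPowFDeriv p hx, abs_mul, abs_of_nonneg (rpow_nonneg (norm_nonneg x) _)]

end RadialPow

section DeformedFourier

open scoped InnerProductSpace

variable {V : Type*} [NormedAddCommGroup V] [InnerProductSpace ℝ V]

/-- The kernel of the deformed Fourier transform on a real inner product space; on
`EuclideanSpace ℝ (Fin m)` it is `Kker m`. -/
noncomputable def deformedFourierKernel (a b : ℝ) (x y : V) : ℂ :=
  (((‖x‖ * ‖y‖) ^ (-(a * b) / 2) : ℝ) : ℂ) *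
    Complex.exp (-(2 * Complex.I / a) * (⟪x, y⟫_ℝ : ℂ) * (((‖x‖ * ‖y‖) ^ (a / 2 - 1) : ℝ) : ℂ))

theorem Kker_eq_deformedFourierKernel {m : ℕ} (a b : ℝ) (x y : EuclideanSpace ℝ (Fin m)) :
    Kker m a b x y = deformedFourierKernel a b x y := by
  simp only [Kker, deformedFourierKernel, PiLp.inner_apply, RCLike.inner_apply, conj_trivial,
    mul_comm (y _)]

theorem deformedFourierKernel_eq_mul_cexp_inner_radialPow (a b : ℝ) (x y : V) :
    deformedFourierKernel a b x y =
      ((‖x‖ ^ (-(a * b) / 2) * ‖y‖ ^ (-(a * b) / 2) : ℝ) : ℂ) *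
        Complex.exp (-(2 * Complex.I / a) * ⟪radialPow (a / 2) y, radialPow (a / 2) x⟫_ℝ) := by
  rw [real_inner_comm, inner_radialPow_radialPow, deformedFourierKernel,
    mul_rpow (norm_nonneg x) (norm_nonneg y)]
  push_cast
  ring_nf

theorem sq_norm_radialPow_half {a : ℝ} (ha : a ≠ 0) (x : V) :
    ‖radialPow (a / 2) x‖ ^ 2 = ‖x‖ ^ a := by
  rw [norm_radialPow (div_ne_zero ha two_ne_zero), ← rpow_natCast, ← rpow_mul (norm_nonneg x),
    Nat.cast_ofNat, div_mul_cancel₀ _ two_ne_zero]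

theorem lagP16_eq_mul_eval_laguerre (m : ℕ) {a : ℝ} (ha : a ≠ 0) (t : ℕ) {r : ℝ} (hr : 0 ≤ r) :
    lagP16 m a t r = (8 / a) ^ t * (laguerre ((m : ℝ) / 2) t).eval (2 / a * r ^ a) := by
  have hscale (i n : ℕ) : (2 : ℝ) ^ (2 * (i + n)) * (2 / a) ^ (2 * (i + n)) * (a / 2) ^ n =
      (8 / a) ^ (i + n) * (2 / a) ^ i := by
    have hcancel : (2 / a) ^ n * (a / 2) ^ n = 1 := by
      rw [← mul_pow, div_mul_div_cancel₀ ha, div_self two_ne_zero, one_pow]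
    rw [show 8 / a = 2 ^ 2 * (2 / a) by ring, mul_pow, ← pow_mul]
    linear_combination 2 ^ (2 * (i + n)) * (2 / a) ^ (2 * i + n) * hcancel
  rw [lagP16, ← Polynomial.coe_aeval_eq_eval, aeval_laguerre _ le_rfl, Finset.mul_sum]
  refine Finset.sum_congr rfl fun i hi => ?_
  obtain ⟨n, rfl⟩ := Nat.exists_eq_add_of_le (Finset.mem_range_succ_iff.mp hi)
  rw [Algebra.algebraMap_self_apply, rpow_mul hr, rpow_natCast, Nat.add_sub_cancel_left,
    neg_pow (2 / a * r ^ a), mul_pow (2 / a)]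
  linear_combination ((i + n).choose i *
    (Gamma ((m : ℝ) / 2 + ↑(i + n)) / Gamma ((m : ℝ) / 2 + i)) * (-1) ^ i * (r ^ a) ^ i) *
      hscale i n

theorem lagP16_mul_exp_eq_laguerreGaussian {a : ℝ} (ha : a ≠ 0) (t : ℕ) (x : V) :
    ((lagP16 (Module.finrank ℝ V) a t ‖x‖ * rexp (-‖x‖ ^ a / a) : ℝ) : ℂ) =
      ((8 / a) ^ t : ℝ) * laguerreGaussian (1 / a : ℂ) t (radialPow (a / 2) x) := by
  have hargument : 2 * (1 / a : ℂ) * ((‖x‖ ^ a : ℝ) : ℂ) =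
      algebraMap ℝ ℂ (2 / a * ‖x‖ ^ a) := by
    rw [Complex.coe_algebraMap]
    push_cast
    ring
  rw [lagP16_eq_mul_eval_laguerre _ ha t (norm_nonneg x), laguerreGaussian,
    ← Complex.ofReal_pow ‖radialPow (a / 2) x‖, sq_norm_radialPow_half ha, hargument,
    Polynomial.aeval_algebraMap_apply_eq_algebraMap_eval, Complex.coe_algebraMap]
  push_cast
  ring_nf

theorem two_pi_rpow_neg_mul_two_div_rpow_mul_pi_mul_rpow {a : ℝ} (ha : 0 < a) (ν : ℝ) :
    (2 * π) ^ (-ν) * (2 / a) ^ (ν - 1) * (2 / a * (π * a) ^ ν) = 1 := by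
  rw [← mul_assoc, mul_assoc (_ ^ _), ← rpow_add_one (by positivity), sub_add_cancel,
    rpow_neg (by positivity), mul_assoc, ← mul_rpow (by positivity) (by positivity),
    show 2 / a * (π * a) = 2 * π by field_simp]
  exact inv_mul_cancel₀ (by positivity)

variable [FiniteDimensional ℝ V] [MeasurableSpace V] [BorelSpace V] [Nontrivial V]

theorem integral_deformedFourierKernel_mul {a : ℝ} (ha : 0 < a) (b : ℝ) (f : V → ℂ) (y : V) :
    ∫ x : V, deformedFourierKernel a b x y * (f (radialPow (a / 2) x) *
        ((‖x‖ ^ (-(a * b) / 2) * ‖x‖ ^ (a * b - (1 - a / 2) * Module.finrank ℝ V) : ℝ) : ℂ)) =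
      ((2 / a * ‖y‖ ^ (-(a * b) / 2) : ℝ) : ℂ) *
        ∫ u : V, f u * Complex.exp (-(2 * Complex.I / a) * ⟪radialPow (a / 2) y, u⟫_ℝ) := by
  have hsubst := integral_radialPow_smul volume (div_ne_zero ha.ne' two_ne_zero) fun u : V =>
    f u * Complex.exp (-(2 * Complex.I / a) * ⟪radialPow (a / 2) y, u⟫_ℝ)
  rw [← hsubst, ← integral_const_mul]
  refine integral_congr_ae ?_
  filter_upwards [Measure.ae_ne volume (0 : V)] with x hx
  have hpow : ‖x‖ ^ (-(a * b) / 2) * (‖x‖ ^ (-(a * b) / 2) *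
        ‖x‖ ^ (a * b - (1 - a / 2) * Module.finrank ℝ V)) =
      2 / a * (|a / 2| * ‖x‖ ^ ((a / 2 - 1) * Module.finrank ℝ V)) := by
    have hx' := norm_pos_iff.mpr hx
    have hcancel : 2 / a * |a / 2| = 1 := by
      rw [abs_of_pos (by positivity)]
      field_simp
    rw [← rpow_add hx', ← rpow_add hx', ← mul_assoc (2 / a), hcancel, one_mul]
    ring_nf
  have hpowC := congrArg Complex.ofReal hpow
  rw [deformedFourierKernel_eq_mul_cexp_inner_radialPow, Complex.real_smul]
  simp only [Complex.ofReal_mul] at hpowC ⊢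
  linear_combination ((‖y‖ ^ (-(a * b) / 2) : ℝ) * f (radialPow (a / 2) x) *
    Complex.exp (-(2 * Complex.I / a) * ⟪radialPow (a / 2) y, radialPow (a / 2) x⟫_ℝ)) * hpowC

theorem integral_laguerreGaussian_one_div_mul_cexp {a : ℝ} (ha : 0 < a) (t : ℕ) (w : V) :
    ∫ u : V, laguerreGaussian (1 / a : ℂ) t u * Complex.exp (-(2 * Complex.I / a) * ⟪w, u⟫_ℝ) =
      (((-1) ^ t * (π * a) ^ ((Module.finrank ℝ V : ℝ) / 2) : ℝ) : ℂ) *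
        laguerreGaussian (1 / a : ℂ) t w := by
  have hre : 0 < (1 / a : ℂ).re := by
    rw [← Complex.ofReal_one, ← Complex.ofReal_div, Complex.ofReal_re]
    positivity
  have h := integral_laguerreGaussian_mul_cexp hre t w
  rw [mul_one_div, div_div_eq_mul_div, div_one, ← Complex.ofReal_mul,
    ← Complex.ofReal_cpow (by positivity)] at h
  rw [h]
  push_cast
  rfl

theorem integral_deformedFourierKernel_mul_lagP16 {a : ℝ} (ha : 0 < a) (b : ℝ) (t : ℕ) (y : V) :
    ∫ x : V, deformedFourierKernel a b x y *
        ((lagP16 (Module.finrank ℝ V) a t ‖x‖ * ‖x‖ ^ (-(a * b) / 2) * rexp (-‖x‖ ^ a / a) *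
          ‖x‖ ^ (a * b - (1 - a / 2) * Module.finrank ℝ V) : ℝ) : ℂ) =
      ((2 / a * (π * a) ^ ((Module.finrank ℝ V : ℝ) / 2) *
        ((-1) ^ t * lagP16 (Module.finrank ℝ V) a t ‖y‖ * ‖y‖ ^ (-(a * b) / 2) *
          rexp (-‖y‖ ^ a / a)) : ℝ) : ℂ) := by
  have hprofile (x : V) := lagP16_mul_exp_eq_laguerreGaussian ha.ne' t x
  calc
    _ = ∫ x : V, deformedFourierKernel a b x y *
          (((8 / a) ^ t : ℝ) * laguerreGaussian (1 / a : ℂ) t (radialPow (a / 2) x) *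
            ((‖x‖ ^ (-(a * b) / 2) *
              ‖x‖ ^ (a * b - (1 - a / 2) * Module.finrank ℝ V) : ℝ) : ℂ)) := by
      refine integral_congr_ae (.of_forall fun x => ?_)
      simp only [← hprofile, ← Complex.ofReal_mul]
      congr 2
      ring
    _ = ((2 / a * ‖y‖ ^ (-(a * b) / 2) : ℝ) : ℂ) * (((8 / a) ^ t : ℝ) *
          ((((-1) ^ t * (π * a) ^ ((Module.finrank ℝ V : ℝ) / 2) : ℝ) : ℂ) *
            laguerreGaussian (1 / a : ℂ) t (radialPow (a / 2) y))) := by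
      rw [integral_deformedFourierKernel_mul ha b
        fun u => ((8 / a) ^ t : ℝ) * laguerreGaussian (1 / a : ℂ) t u]
      simp only [mul_assoc ((_ : ℝ) : ℂ) (laguerreGaussian _ _ _), integral_const_mul,
        integral_laguerreGaussian_one_div_mul_cexp ha]
    _ = _ := by
      rw [mul_left_comm (((8 / a) ^ t : ℝ) : ℂ), ← hprofile, ← Complex.ofReal_mul,
        ← Complex.ofReal_mul]
      ring_nf

end DeformedFourier

theorem stmt_16_general {V : Type*} [NormedAddCommGroup V] [InnerProductSpace ℝ V]
    [FiniteDimensional ℝ V] [MeasurableSpace V] [BorelSpace V] {a : ℝ} (ha : 0 < a) (b : ℝ)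
    (t : ℕ) {y : V} (hy : y ≠ 0) :
    (((2 * π) ^ (-((Module.finrank ℝ V : ℝ) / 2)) *
          (2 / a) ^ ((Module.finrank ℝ V : ℝ) / 2 - 1) : ℝ) : ℂ) *
        ∫ x : V, deformedFourierKernel a b x y *
          ((lagP16 (Module.finrank ℝ V) a t ‖x‖ * ‖x‖ ^ (-(a * b) / 2) * rexp (-‖x‖ ^ a / a) *
            ‖x‖ ^ (a * b - (1 - a / 2) * Module.finrank ℝ V) : ℝ) : ℂ) =
      (((-1) ^ t * lagP16 (Module.finrank ℝ V) a t ‖y‖ * ‖y‖ ^ (-(a * b) / 2) *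
        rexp (-‖y‖ ^ a / a) : ℝ) : ℂ) := by
  have : Nontrivial V := nontrivial_of_ne y 0 hy
  rw [integral_deformedFourierKernel_mul_lagP16 ha, ← Complex.ofReal_mul, ← mul_assoc,
    two_pi_rpow_neg_mul_two_div_rpow_mul_pi_mul_rpow ha, one_mul]

theorem stmt_16 (m : ℕ) (hm : 2 ≤ m) (a b : ℝ) (ha : 0 < a)
    (t : ℕ) (y : EuclideanSpace ℝ (Fin m)) (hy : y ≠ 0) :
    (((2 * Real.pi) ^ (-((m : ℝ) / 2)) * (2 / a) ^ ((m : ℝ) / 2 - 1) : ℝ) : ℂ)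
        * ∫ x : EuclideanSpace ℝ (Fin m),
            Kker m a b x y
              * ((lagP16 m a t ‖x‖ * ‖x‖ ^ (-(a * b) / 2) * Real.exp (-‖x‖ ^ a / a)
                  * ‖x‖ ^ (a * b - (1 - a / 2) * m) : ℝ) : ℂ)
      = (((-1 : ℝ) ^ t * lagP16 m a t ‖y‖ * ‖y‖ ^ (-(a * b) / 2)
          * Real.exp (-‖y‖ ^ a / a) : ℝ) : ℂ) := by
  simpa only [finrank_euclideanSpace_fin, Kker_eq_deformedFourierKernel] using
    stmt_16_general ha b t hy
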